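/- Let I ⊆ R be a bihomogeneous ideal, (a,b) an admissible bidegree for I, and h an admissible linear form for (a,b). The assignment g' ↦ m_{g'} is a well-defined ring homomorphism from (R_{X,h})₀ to the k-algebra of k-linear endomorphisms of (R/I)_{(a,b)} (in particular, m_{g'} is independent of the chosen representative g/h^k of g'), and its image is a commutative subring: m_1 = Id, m_{g'+f'} = m_{g'} + m_{f'}, and m_{g'f'} = m_{g'} ∘ m_{f'} = m_{f'} ∘ m_{g'} for all f', g' ∈ (R_{X,h})₀. -/

import Mathlib

open MvPolynomial

noncomputable section

/-- The variables of the bigraded ring: `x₀,…,xₙ` and `y₀,…,y_m`. -/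
abbrev Vars (n m : ℕ) := Fin (n+1) ⊕ Fin (m+1)

/-- The bigrading weight: `deg xᵢ = (1,0)`, `deg y_j = (0,1)`. -/
def wB (n m : ℕ) : Vars n m → ℕ × ℕ := Sum.elim (fun _ => (1, 0)) (fun _ => (0, 1))

/-- The bigraded polynomial ring `R = k[x₀,…,xₙ,y₀,…,y_m]`. -/
abbrev BiRing (k : Type*) [Field k] (n m : ℕ) := MvPolynomial (Vars n m) k

variable (k : Type*) [Field k] (n m : ℕ)

/-- The `k`-vector space of bihomogeneous polynomials of bidegree `d`. -/
def biComponent (d : ℕ × ℕ) : Submodule k (BiRing k n m) :=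
  weightedHomogeneousSubmodule k (wB n m) d

/-- An ideal is bihomogeneous if it is generated by bihomogeneous elements. -/
def IsBihomogeneous (I : Ideal (BiRing k n m)) : Prop :=
  ∃ S : Set (BiRing k n m), Ideal.span S = I ∧
    ∀ f ∈ S, ∃ d : ℕ × ℕ, f.IsWeightedHomogeneous (wB n m) d

/-- `I` is generated in bidegrees componentwise at most `(a,b)`. -/
def GenInDegLE (I : Ideal (BiRing k n m)) (a b : ℕ) : Prop :=
  ∃ S : Set (BiRing k n m), Ideal.span S = I ∧
    ∀ f ∈ S, ∃ d : ℕ × ℕ, d.1 ≤ a ∧ d.2 ≤ b ∧ f.IsWeightedHomogeneous (wB n m) d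

/-- The Hilbert function `HF_{R/I}(a,b) = dim_k (R/I)_{(a,b)}`, where `(R/I)_{(a,b)}` is the
image of the bidegree-`(a,b)` component of `R` in `R/I`. -/
def HF (I : Ideal (BiRing k n m)) (a b : ℕ) : ℕ :=
  Module.finrank k ((biComponent k n m (a, b)).map (Ideal.Quotient.mkₐ k I).toLinearMap)

/-- `h` is an admissible linear form for `I` at bidegree `(a,b)`:  `h` has bidegree `(1,0)`,
`HF_{R/I}(a,b) = HF_{R/I}(a+1,b)` and `HF_{R/(I+⟨h⟩)}(a,b) = 0`. -/
def IsAdmissibleForm (I : Ideal (BiRing k n m)) (a b : ℕ) (h : BiRing k n m) : Prop :=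
  h.IsWeightedHomogeneous (wB n m) (1, 0) ∧
  HF k n m I a b = HF k n m I (a+1) b ∧
  HF k n m (I ⊔ Ideal.span {h}) a b = 0

/-- `(a,b)` is an admissible bidegree for `I`: `I` is generated in bidegrees `≤ (a,b)` and
there is an admissible linear form for `(a,b)`. -/
def IsAdmissible (I : Ideal (BiRing k n m)) (a b : ℕ) : Prop :=
  GenInDegLE k n m I a b ∧ ∃ h, IsAdmissibleForm k n m I a b h

/-- `(R/I)_{(a,b)}`: the bidegree-`(a,b)` part of `R/I`. -/
def quotComponent (I : Ideal (BiRing k n m)) (a b : ℕ) :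
    Submodule k (BiRing k n m ⧸ I) :=
  (biComponent k n m (a, b)).map (Ideal.Quotient.mkₐ k I).toLinearMap

lemma biComponent_le_restrictTotalDegree (d : ℕ × ℕ) :
    biComponent k n m d ≤ restrictTotalDegree (Vars n m) k (d.1 + d.2) := by
  intro p hp
  rw [mem_restrictTotalDegree]
  apply Finset.sup_le
  intro s hs
  have h1 : Finsupp.weight (wB n m) s = d := hp (mem_support_iff.mp hs)
  have h2 : (Finsupp.weight (wB n m) s).1 + (Finsupp.weight (wB n m) s).2
      = s.sum fun _ e => e := by
    rw [Finsupp.weight_apply, Finsupp.sum, Finsupp.sum, Prod.fst_sum, Prod.snd_sum,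
      ← Finset.sum_add_distrib]
    apply Finset.sum_congr rfl
    intro i _
    rcases i with i | j <;> simp [wB]
  rw [h1] at h2
  rw [← h2]

instance (d : ℕ × ℕ) : Module.Finite k (biComponent k n m d) :=
  Submodule.finiteDimensional_of_le (biComponent_le_restrictTotalDegree k n m d)

instance (I : Ideal (BiRing k n m)) (a b : ℕ) : Module.Finite k (quotComponent k n m I a b) :=
  Module.Finite.map _ _

/-- The multiplication map `m̄_g : (R/I)_{(a,b)} → (R/I)_{(a+c,b)}`, `[f] ↦ [g·f]`,
for `g` bihomogeneous of bidegree `(c,0)`. -/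
def mulMap (I : Ideal (BiRing k n m)) (a b c : ℕ) (g : BiRing k n m)
    (hg : g.IsWeightedHomogeneous (wB n m) (c, 0)) :
    quotComponent k n m I a b →ₗ[k] quotComponent k n m I (a+c) b :=
  (LinearMap.mulLeft k (Ideal.Quotient.mkₐ k I g)).restrict
    (p := quotComponent k n m I a b) (q := quotComponent k n m I (a+c) b)
    (by
      rintro x ⟨f, hf, rfl⟩
      refine ⟨g * f, ?_, by simp [map_mul]⟩
      have h2 : ((c, 0) + (a, b) : ℕ × ℕ) = (a + c, b) := by
        simp [Prod.ext_iff, Nat.add_comm]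
      exact h2 ▸ hg.mul hf)

/- The endomorphism `m_{g/s}` is characterised by the equation `s • m_{g/s} x = g • x`, which
determines it because `s` acts injectively. Every identity between such maps is therefore the
corresponding identity between fractions, and `m_{g/s}`, `m_{g'/s'}` commute because the scalars
do. -/

section Semiring

variable {k R M : Type*} [Semiring k] [Semiring R] [AddCommMonoid M] [Module k M] [Module R M]
  {N : Submodule k M} {s g g' : R} {φ φ' : Module.End k N}

/-- The endomorphism `φ` of `N` is multiplication by the fraction `g / s`. Division by `s` is
avoided by clearing denominators in `M`, so neither `s` nor `g` has to preserve `N`. -/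
def ActsAsFraction (s g : R) (φ : Module.End k N) : Prop :=
  ∀ x : N, s • (φ x : M) = g • (x : M)

theorem ActsAsFraction.id (s : R) : ActsAsFraction s s (LinearMap.id : Module.End k N) :=
  fun _ ↦ rfl

theorem ActsAsFraction.add (hφ : ActsAsFraction s g φ) (hφ' : ActsAsFraction s g' φ') :
    ActsAsFraction s (g + g') (φ + φ') := fun x ↦ by
  rw [LinearMap.add_apply, Submodule.coe_add, smul_add, hφ, hφ', add_smul]

theorem ActsAsFraction.mul_left (hφ : ActsAsFraction s g φ) (t : R) :
    ActsAsFraction (t * s) (t * g) φ := fun x ↦ by rw [mul_smul, hφ, mul_smul]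

theorem ActsAsFraction.unique (hs : Set.InjOn (fun x : M ↦ s • x) N) (hφ : ActsAsFraction s g φ)
    (hφ' : ActsAsFraction s g φ') : φ = φ' :=
  LinearMap.ext fun x ↦ Subtype.ext <|
    hs (φ x).2 (φ' x).2 ((hφ x).trans (hφ' x).symm)

end Semiring

section CommSemiring

variable {k R M : Type*} [Semiring k] [CommSemiring R] [AddCommMonoid M] [Module k M] [Module R M]
  {N : Submodule k M} {s t g g' : R} {φ φ' : Module.End k N}

theorem ActsAsFraction.comp (hφ : ActsAsFraction s g φ) (hφ' : ActsAsFraction t g' φ') :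
    ActsAsFraction (s * t) (g * g') (φ ∘ₗ φ') := fun x ↦
  calc (s * t) • (φ (φ' x) : M)
    _ = t • s • (φ (φ' x) : M) := by rw [mul_comm, mul_smul]
    _ = g • t • (φ' x : M) := by rw [hφ, smul_comm]
    _ = (g * g') • (x : M) := by rw [hφ', mul_smul]

theorem ActsAsFraction.eq_of_cross_mul_eq (hst : Set.InjOn (fun x : M ↦ (s * t) • x) N)
    (hφ : ActsAsFraction s g φ) (hφ' : ActsAsFraction t g' φ') (h : t * g = s * g') :
    φ = φ' :=
  unique hst (by simpa only [mul_comm t s, h] using hφ.mul_left t) (hφ'.mul_left s)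

end CommSemiring

section GradedSMul

variable {k R M σ : Type*} [Semiring k] [Semiring R] [AddCommMonoid M] [Module k M]
  [Module R M] [SMulCommClass R k M] [SetLike σ R] {𝒜 : ℕ → σ}

/-- Multiplication by an element `g` of degree `c`, as a map from the degree-`a` piece of a graded
module to the degree-`(a + c)` piece. -/
def gradedSMulMap (ℳ : ℕ → Submodule k M) [SetLike.GradedSMul 𝒜 ℳ] (a : ℕ) {c : ℕ} (g : R)
    (hg : g ∈ 𝒜 c) : ℳ a →ₗ[k] ℳ (a + c) :=
  (DistribSMul.toLinearMap k M g).restrict fun _ hx ↦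
    Nat.add_comm c a ▸ SetLike.GradedSMul.smul_mem hg hx

variable {ℳ : ℕ → Submodule k M} [SetLike.GradedSMul 𝒜 ℳ]

theorem injOn_smul_of_comp_gradedSMulMap_eq_id {a c : ℕ} {s : R} {hs : s ∈ 𝒜 c}
    {χ : ℳ (a + c) →ₗ[k] ℳ a} (hχ : χ ∘ₗ gradedSMulMap ℳ a s hs = LinearMap.id) :
    Set.InjOn (fun x : M ↦ s • x) (ℳ a) := by
  have hinj : Function.Injective (gradedSMulMap ℳ a s hs) :=
    LinearMap.injective_of_comp_eq_id _ _ hχ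
  intro x hx y hy hxy
  exact congrArg Subtype.val (@hinj ⟨x, hx⟩ ⟨y, hy⟩ (Subtype.ext hxy))

theorem actsAsFraction_comp_gradedSMulMap {a c : ℕ} {s g : R} {hs : s ∈ 𝒜 c}
    {χ : ℳ (a + c) →ₗ[k] ℳ a} (hχ : gradedSMulMap ℳ a s hs ∘ₗ χ = LinearMap.id) (hg : g ∈ 𝒜 c) :
    ActsAsFraction s g (χ ∘ₗ gradedSMulMap ℳ a g hg) := fun x ↦
  congrArg Subtype.val (LinearMap.congr_fun hχ (gradedSMulMap ℳ a g hg x))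

end GradedSMul

theorem statement_10_general {k R M σ : Type*} [Semiring k] [CommSemiring R] [AddCommMonoid M]
    [Module k M] [Module R M] [SMulCommClass R k M] [SetLike σ R] {𝒜 : ℕ → σ}
    {ℳ : ℕ → Submodule k M} [SetLike.GradedSMul 𝒜 ℳ]
    (a : ℕ) (h : R) (hpow : ∀ c : ℕ, h ^ c ∈ 𝒜 c)
    (ψ : ∀ c : ℕ, ℳ (a + c) →ₗ[k] ℳ a)
    (hψ : ∀ c : ℕ, ψ c ∘ₗ gradedSMulMap ℳ a (h ^ c) (hpow c) = LinearMap.id ∧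
      gradedSMulMap ℳ a (h ^ c) (hpow c) ∘ₗ ψ c = LinearMap.id) :
    (∀ (c₁ c₂ : ℕ) (g₁ g₂ : R) (hg₁ : g₁ ∈ 𝒜 c₁) (hg₂ : g₂ ∈ 𝒜 c₂),
      h ^ c₂ * g₁ = h ^ c₁ * g₂ →
        ψ c₁ ∘ₗ gradedSMulMap ℳ a g₁ hg₁ = ψ c₂ ∘ₗ gradedSMulMap ℳ a g₂ hg₂) ∧
    (∀ h1 : (1 : R) ∈ 𝒜 0, ψ 0 ∘ₗ gradedSMulMap ℳ a 1 h1 = LinearMap.id) ∧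
    (∀ (c : ℕ) (g₁ g₂ : R) (hg₁ : g₁ ∈ 𝒜 c) (hg₂ : g₂ ∈ 𝒜 c) (hg₁₂ : g₁ + g₂ ∈ 𝒜 c),
      ψ c ∘ₗ gradedSMulMap ℳ a (g₁ + g₂) hg₁₂
        = ψ c ∘ₗ gradedSMulMap ℳ a g₁ hg₁ + ψ c ∘ₗ gradedSMulMap ℳ a g₂ hg₂) ∧
    (∀ (c₁ c₂ : ℕ) (g₁ g₂ : R) (hg₁ : g₁ ∈ 𝒜 c₁) (hg₂ : g₂ ∈ 𝒜 c₂)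
        (hg₁₂ : g₁ * g₂ ∈ 𝒜 (c₁ + c₂)),
      ψ (c₁ + c₂) ∘ₗ gradedSMulMap ℳ a (g₁ * g₂) hg₁₂
          = (ψ c₁ ∘ₗ gradedSMulMap ℳ a g₁ hg₁) ∘ₗ (ψ c₂ ∘ₗ gradedSMulMap ℳ a g₂ hg₂) ∧
      ψ (c₁ + c₂) ∘ₗ gradedSMulMap ℳ a (g₁ * g₂) hg₁₂
          = (ψ c₂ ∘ₗ gradedSMulMap ℳ a g₂ hg₂) ∘ₗ (ψ c₁ ∘ₗ gradedSMulMap ℳ a g₁ hg₁)) := by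
  have hinj (c : ℕ) : Set.InjOn (fun x : M ↦ h ^ c • x) (ℳ a) :=
    injOn_smul_of_comp_gradedSMulMap_eq_id (hψ c).1
  have hfrac {c : ℕ} {g : R} (hg : g ∈ 𝒜 c) :
      ActsAsFraction (h ^ c) g (ψ c ∘ₗ gradedSMulMap ℳ a g hg) :=
    actsAsFraction_comp_gradedSMulMap (hψ c).2 hg
  refine ⟨fun c₁ c₂ g₁ g₂ hg₁ hg₂ hcross ↦ ?_, fun h1 ↦ ?_, fun c g₁ g₂ hg₁ hg₂ hg₁₂ ↦ ?_,
    fun c₁ c₂ g₁ g₂ hg₁ hg₂ hg₁₂ ↦ ⟨?_, ?_⟩⟩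
  · exact (hfrac hg₁).eq_of_cross_mul_eq (pow_add h c₁ c₂ ▸ hinj (c₁ + c₂)) (hfrac hg₂) hcross
  · exact (hfrac h1).unique (hinj 0) (by simpa only [pow_zero] using ActsAsFraction.id 1)
  · exact (hfrac hg₁₂).unique (hinj c) ((hfrac hg₁).add (hfrac hg₂))
  · exact (hfrac hg₁₂).unique (hinj _) (pow_add h c₁ c₂ ▸ (hfrac hg₁).comp (hfrac hg₂))
  · refine (hfrac hg₁₂).unique (hinj _) ?_
    simpa only [pow_add, mul_comm] using (hfrac hg₂).comp (hfrac hg₁)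

instance quotComponent.gradedSMul (I : Ideal (BiRing k n m)) (b : ℕ) :
    SetLike.GradedSMul (fun c ↦ biComponent k n m (c, 0)) (fun a ↦ quotComponent k n m I a b) where
  smul_mem := by
    rintro c a g _ hg ⟨f, hf, rfl⟩
    refine ⟨g * f, ?_, rfl⟩
    have hgf := IsWeightedHomogeneous.mul hg hf
    rwa [Prod.mk_add_mk, zero_add] at hgf

/-- Let `(a,b)` be an admissible bidegree for the bihomogeneous ideal `I` with
admissible linear form `h`.  Denote by `ψ c` the (two-sided) inverse of `m̄_{h^c}`, so that the
multiplication map by `g' = g/h^c ∈ (R_{X,h})₀` is `m_{g'} = ψ c ∘ m̄_g`.  Then `g' ↦ m_{g'}` is a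
well-defined ring homomorphism from `(R_{X,h})₀` to the endomorphisms of `(R/I)_{(a,b)}`, with
commutative image: it is independent of the representative `g/h^c`, sends `1` to the identity,
sums to sums, and products to (commuting) compositions. -/
theorem statement_10 (k : Type*) [Field k] (hk : Infinite k) (n m : ℕ)
    (I : Ideal (BiRing k n m)) (hI : IsBihomogeneous k n m I)
    (a b : ℕ) (h : BiRing k n m)
    (hgen : GenInDegLE k n m I a b) (hadm : IsAdmissibleForm k n m I a b h)
    (hpow : ∀ c : ℕ, (h ^ c).IsWeightedHomogeneous (wB n m) (c, 0))
    (ψ : ∀ c : ℕ, quotComponent k n m I (a+c) b →ₗ[k] quotComponent k n m I a b)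
    (hψ : ∀ c : ℕ, ψ c ∘ₗ mulMap k n m I a b c (h ^ c) (hpow c) = LinearMap.id ∧
      mulMap k n m I a b c (h ^ c) (hpow c) ∘ₗ ψ c = LinearMap.id) :
    (∀ (c₁ c₂ : ℕ) (g₁ g₂ : BiRing k n m)
        (hg₁ : g₁.IsWeightedHomogeneous (wB n m) (c₁, 0))
        (hg₂ : g₂.IsWeightedHomogeneous (wB n m) (c₂, 0)),
      h ^ c₂ * g₁ = h ^ c₁ * g₂ →
        ψ c₁ ∘ₗ mulMap k n m I a b c₁ g₁ hg₁ = ψ c₂ ∘ₗ mulMap k n m I a b c₂ g₂ hg₂) ∧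
    (∀ h1 : (1 : BiRing k n m).IsWeightedHomogeneous (wB n m) (0, 0),
      ψ 0 ∘ₗ mulMap k n m I a b 0 1 h1 = LinearMap.id) ∧
    (∀ (c : ℕ) (g₁ g₂ : BiRing k n m)
        (hg₁ : g₁.IsWeightedHomogeneous (wB n m) (c, 0))
        (hg₂ : g₂.IsWeightedHomogeneous (wB n m) (c, 0))
        (hg₁₂ : (g₁ + g₂).IsWeightedHomogeneous (wB n m) (c, 0)),
      ψ c ∘ₗ mulMap k n m I a b c (g₁ + g₂) hg₁₂
        = ψ c ∘ₗ mulMap k n m I a b c g₁ hg₁ + ψ c ∘ₗ mulMap k n m I a b c g₂ hg₂) ∧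
    (∀ (c₁ c₂ : ℕ) (g₁ g₂ : BiRing k n m)
        (hg₁ : g₁.IsWeightedHomogeneous (wB n m) (c₁, 0))
        (hg₂ : g₂.IsWeightedHomogeneous (wB n m) (c₂, 0))
        (hg₁₂ : (g₁ * g₂).IsWeightedHomogeneous (wB n m) (c₁ + c₂, 0)),
      ψ (c₁ + c₂) ∘ₗ mulMap k n m I a b (c₁ + c₂) (g₁ * g₂) hg₁₂
          = (ψ c₁ ∘ₗ mulMap k n m I a b c₁ g₁ hg₁) ∘ₗ (ψ c₂ ∘ₗ mulMap k n m I a b c₂ g₂ hg₂) ∧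
      ψ (c₁ + c₂) ∘ₗ mulMap k n m I a b (c₁ + c₂) (g₁ * g₂) hg₁₂
          = (ψ c₂ ∘ₗ mulMap k n m I a b c₂ g₂ hg₂) ∘ₗ (ψ c₁ ∘ₗ mulMap k n m I a b c₁ g₁ hg₁)) := by
  -- `mulMap` unfolds to `gradedSMulMap`: `[g] * [f]` and `g • [f]` are definitionally equal.
  exact statement_10_general (𝒜 := fun c ↦ biComponent k n m (c, 0))
    (ℳ := fun a ↦ quotComponent k n m I a b) a h hpow ψ hψ
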